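/- arXiv:1011.3654 — 2 statements merged into one kernel-verified Lean document; each statement's English description precedes it below -/
import Mathlib

section
/- Let m ≥ 1 be an integer and suppose q ≠ 0. A polynomial f ∈ K[X] is diagonally (G(m,n),q)-harmonic (i.e., D_{q,d} f = 0 for every d ∈ ℕ^ℓ with |d| a positive multiple of m) if and only if D_{q,d} f = 0 for every d ∈ ℕ^ℓ with |d| = m or |d| = 2m. -/
open MvPolynomial

/-- The operator `∂_j^d = ∂_{1j}^{d 1} ⋯ ∂_{ℓj}^{d ℓ}` on `K[X]`,
`X` an `ℓ × n` matrix of variables. -/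
noncomputable def pdj {K : Type*} [Field K] {ℓ n : ℕ} (d : Fin ℓ → ℕ) (j : Fin n) :
    Module.End K (MvPolynomial (Fin ℓ × Fin n) K) :=
  ((List.finRange ℓ).map fun i =>
    ((pderiv (i, j)).toLinearMap : Module.End K (MvPolynomial (Fin ℓ × Fin n) K)) ^ d i).prod

/-- The deformed operator
`D_{q,d} = ∑_j (1 + q (x_{1j}∂_{1j} + ⋯ + x_{ℓj}∂_{ℓj})) ∘ ∂_j^d` on `K[X]`. -/
noncomputable def Dq {K : Type*} [Field K] (ℓ n : ℕ) (q : K) (d : Fin ℓ → ℕ) :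
    Module.End K (MvPolynomial (Fin ℓ × Fin n) K) :=
  ∑ j : Fin n,
    (1 + q • ∑ i : Fin ℓ,
        (LinearMap.mulLeft K (X (i, j)) * (pderiv (i, j)).toLinearMap)) * pdj d j


section helpers
variable {K : Type*} [Field K] {ℓ n : ℕ}

/-- partial derivative as an endomorphism -/
noncomputable abbrev PD (p : Fin ℓ × Fin n) : Module.End K (MvPolynomial (Fin ℓ × Fin n) K) :=
  (pderiv p).toLinearMap

/-- column Euler operator -/
noncomputable def Eu (j : Fin n) : Module.End K (MvPolynomial (Fin ℓ × Fin n) K) :=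
  ∑ i : Fin ℓ, (LinearMap.mulLeft K (X (i, j)) * PD (i, j))

lemma PD_comm (p p' : Fin ℓ × Fin n) : Commute (PD (K := K) p) (PD p') := by
  have h : ⁅(pderiv p : Derivation K (MvPolynomial (Fin ℓ × Fin n) K) (MvPolynomial (Fin ℓ × Fin n) K)),
      (pderiv p' : Derivation K (MvPolynomial (Fin ℓ × Fin n) K) (MvPolynomial (Fin ℓ × Fin n) K))⁆ = 0 := by
    apply MvPolynomial.derivation_ext
    intro i
    rw [Derivation.commutator_apply]
    classical
    simp only [pderiv_X, Derivation.coe_zero, Pi.zero_apply]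
    simp only [Pi.single_apply]
    split_ifs <;> simp
  refine LinearMap.ext fun f => ?_
  have := congrArg (fun D => D f) h
  simp only [Derivation.commutator_apply, Derivation.coe_zero, Pi.zero_apply] at this
  exact sub_eq_zero.mp this

lemma PD_mul_X (p p' : Fin ℓ × Fin n) :
    PD (K := K) p * LinearMap.mulLeft K (X p')
      = LinearMap.mulLeft K (X p') * PD p + (if p' = p then 1 else 0) := by
  refine LinearMap.ext fun f => ?_
  classical
  by_cases h : p' = p
  · subst h
    simp [Derivation.leibniz]
  · simp [Derivation.leibniz, pderiv_X_of_ne h, h]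

lemma PD_mul_Eu (i : Fin ℓ) (j k : Fin n) :
    PD (K := K) (i, j) * Eu k = Eu k * PD (i, j) + (if j = k then PD (i, j) else 0) := by
  classical
  unfold Eu
  rw [Finset.mul_sum, Finset.sum_mul]
  have : ∀ i' : Fin ℓ, PD (K := K) (i, j) * (LinearMap.mulLeft K (X (i', k)) * PD (i', k))
      = LinearMap.mulLeft K (X (i', k)) * PD (i', k) * PD (i, j)
        + if i' = i then (if j = k then PD (i, j) else 0) else 0 := by
    intro i'
    rw [← mul_assoc, PD_mul_X, add_mul, mul_assoc, (PD_comm (i, j) (i', k)).eq, ← mul_assoc]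
    congr 1
    by_cases h1 : i' = i <;> by_cases h2 : j = k
    · subst h1 h2; simp
    · simp [h1, h2, Ne.symm h2, eq_comm]
    · simp [h1, h2]
    · simp [h1, h2]
  rw [Finset.sum_congr rfl fun i' _ => this i', Finset.sum_add_distrib]
  simp

lemma PDpow_mul_Eu (i : Fin ℓ) (j k : Fin n) (t : ℕ) :
    PD (K := K) (i, j) ^ t * Eu k
      = Eu k * PD (i, j) ^ t + (if j = k then (t : K) else 0) • PD (i, j) ^ t := by
  induction t with
  | zero => simp
  | succ t ih =>
    rw [pow_succ', mul_assoc, ih, mul_add, ← mul_assoc, PD_mul_Eu]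
    split_ifs with h
    · simp only [add_mul, mul_smul_comm, mul_assoc, Nat.cast_succ, add_smul, one_smul]
      abel
    · simp [mul_assoc]

lemma pdj_mul_Eu (d : Fin ℓ → ℕ) (j k : Fin n) :
    pdj (K := K) d j * Eu k
      = Eu k * pdj d j + (if j = k then ((∑ i, d i : ℕ) : K) else 0) • pdj d j := by
  have key : ∀ L : List (Fin ℓ), (L.map fun i => PD (K := K) (i, j) ^ d i).prod * Eu k
      = Eu k * (L.map fun i => PD (K := K) (i, j) ^ d i).prod
        + (if j = k then (((L.map d).sum : ℕ) : K) else 0) •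
          (L.map fun i => PD (K := K) (i, j) ^ d i).prod := by
    intro L
    induction L with
    | nil => simp
    | cons a L ih =>
      simp only [List.map_cons, List.prod_cons, List.sum_cons]
      rw [mul_assoc, ih, mul_add, ← mul_assoc, PDpow_mul_Eu]
      split_ifs with h
      · simp only [add_mul, mul_smul_comm, smul_mul_assoc, mul_assoc, Nat.cast_add, add_smul]
        abel
      · simp [mul_assoc]
  have := key (List.finRange ℓ)
  rw [show ((List.finRange ℓ).map d).sum = ∑ i, d i by
    rw [← List.ofFn_eq_map, List.sum_ofFn]] at this
  exact this

lemma pdj_comm (a b : Fin ℓ → ℕ) (j k : Fin n) :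
    Commute (pdj (K := K) a j) (pdj b k) := by
  unfold pdj
  apply Commute.list_prod_left
  intro x hx
  apply Commute.list_prod_right
  intro y hy
  simp only [List.mem_map] at hx hy
  obtain ⟨i, -, rfl⟩ := hx
  obtain ⟨i', -, rfl⟩ := hy
  exact (PD_comm _ _).pow_pow _ _

lemma pdj_add (a b : Fin ℓ → ℕ) (j : Fin n) :
    pdj (K := K) (a + b) j = pdj a j * pdj b j := by
  have key : ∀ L : List (Fin ℓ), (L.map fun i => PD (K := K) (i, j) ^ (a + b) i).prod
      = (L.map fun i => PD (K := K) (i, j) ^ a i).prod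
        * (L.map fun i => PD (K := K) (i, j) ^ b i).prod := by
    intro L
    induction L with
    | nil => simp
    | cons c L ih =>
      simp only [List.map_cons, List.prod_cons]
      rw [ih]
      have hc : Commute (L.map fun i => PD (K := K) (i, j) ^ a i).prod (PD (c, j) ^ b c) := by
        apply Commute.list_prod_left
        intro x hx
        simp only [List.mem_map] at hx
        obtain ⟨i, -, rfl⟩ := hx
        exact (PD_comm _ _).pow_pow _ _
      rw [Pi.add_apply, pow_add, mul_assoc, mul_assoc, ← mul_assoc (PD (c, j) ^ b c), ← hc.eq]
      simp only [mul_assoc]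
  exact key _

lemma Eu_comm (j k : Fin n) : Commute (Eu (K := K) (ℓ := ℓ) j) (Eu k) := by
  by_cases h : j = k
  · subst h; exact Commute.refl _
  · unfold Eu
    apply Commute.sum_left
    intro i _
    apply Commute.sum_right
    intro i' _
    have h1 : Commute (PD (K := K) (i, j)) (LinearMap.mulLeft K (X (i', k))) := by
      have := PD_mul_X (K := K) (i, j) (i', k)
      simpa [Ne.symm h, commute_iff_eq] using this
    have h2 : Commute (PD (K := K) (i', k)) (LinearMap.mulLeft K (X (i, j))) := by
      have := PD_mul_X (K := K) (i', k) (i, j)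
      simpa [h, commute_iff_eq] using this
    have h3 : Commute (LinearMap.mulLeft K (X (i, j) : MvPolynomial (Fin ℓ × Fin n) K))
        (LinearMap.mulLeft K (X (i', k))) := by
      refine LinearMap.ext fun f => ?_
      simp only [Module.End.mul_apply, LinearMap.mulLeft_apply]
      ring
    exact (h3.mul_right h2.symm).mul_left (h1.mul_right (PD_comm _ _))

/-- one column summand -/
noncomputable def Dj (q : K) (d : Fin ℓ → ℕ) (j : Fin n) :
    Module.End K (MvPolynomial (Fin ℓ × Fin n) K) := (1 + q • Eu j) * pdj d j

lemma pdj_mul_one_add (q : K) (d : Fin ℓ → ℕ) (j k : Fin n) :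
    pdj (K := K) d j * (1 + q • Eu k) = (1 + q • Eu k) * pdj d j
      + (if j = k then q * ((∑ i, d i : ℕ) : K) else 0) • pdj d j := by
  rw [mul_add, mul_smul_comm, pdj_mul_Eu, add_mul, smul_mul_assoc, smul_add, smul_smul, mul_ite]
  simp [add_assoc]

lemma Dj_mul (q : K) (a b : Fin ℓ → ℕ) (j k : Fin n) :
    Dj q a j * Dj q b k = (1 + q • Eu j) * (1 + q • Eu k) * (pdj a j * pdj b k)
      + (if j = k then q * ((∑ i, a i : ℕ) : K) else 0) •
        ((1 + q • Eu j) * (pdj a j * pdj b k)) := by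
  unfold Dj
  rw [mul_assoc, ← mul_assoc (pdj a j), pdj_mul_one_add]
  rw [add_mul ((1 + q • Eu k) * _), smul_mul_assoc, mul_assoc (1 + q • Eu k) (pdj a j),
    mul_add (1 + q • Eu j) ((1 + q • Eu k) * _), mul_smul_comm, mul_assoc]

lemma Dj_bracket (q : K) (a b : Fin ℓ → ℕ) (j k : Fin n) :
    Dj q a j * Dj q b k - Dj q b k * Dj q a j
      = if j = k then (q * (((∑ i, a i : ℕ) : K) - ((∑ i, b i : ℕ) : K))) • Dj q (a + b) j
        else 0 := by
  have hE : (1 + q • Eu k) * (1 + q • Eu j)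
      = (1 + q • Eu (K := K) (ℓ := ℓ) j) * (1 + q • Eu k) := by
    have h : Commute (q • Eu (K := K) (ℓ := ℓ) k) (q • Eu j) :=
      ((Eu_comm k j).smul_left q).smul_right q
    exact (((Commute.one_left _).add_left
      ((Commute.one_right _).add_right h)) : Commute _ _).eq
  rw [Dj_mul, Dj_mul, hE, (pdj_comm b a k j).eq]
  by_cases h : j = k
  · subst h
    simp only [if_true, Dj, pdj_add]
    module
  · simp [h, Ne.symm h]

lemma Dq_eq (q : K) (d : Fin ℓ → ℕ) : Dq ℓ n q d = ∑ j, Dj q d j := rfl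

lemma Dq_bracket (q : K) (a b : Fin ℓ → ℕ) :
    Dq ℓ n q a * Dq ℓ n q b - Dq ℓ n q b * Dq ℓ n q a
      = (q * (((∑ i, a i : ℕ) : K) - ((∑ i, b i : ℕ) : K))) • Dq ℓ n q (a + b) := by
  simp only [Dq_eq, Finset.sum_mul_sum]
  rw [Finset.sum_comm (f := fun j k => Dj q b j * Dj q a k), ← Finset.sum_sub_distrib]
  simp only [← Finset.sum_sub_distrib, Dj_bracket, Finset.sum_ite_eq, Finset.mem_univ, if_true,
    Finset.smul_sum]

lemma exists_sub (d : Fin ℓ → ℕ) (t : ℕ) (ht : t ≤ ∑ i, d i) :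
    ∃ a b : Fin ℓ → ℕ, d = a + b ∧ ∑ i, a i = t := by
  induction t with
  | zero => exact ⟨0, d, by simp, by simp⟩
  | succ t ih =>
    obtain ⟨a, b, rfl, h⟩ := ih (by omega)
    have : ∃ i, b i ≠ 0 := by
      by_contra! hb
      simp [hb] at ht
      omega
    obtain ⟨i, hi⟩ := this
    refine ⟨a + Pi.single i 1, b - Pi.single i 1, ?_, ?_⟩
    · funext x
      by_cases hx : x = i
      · subst hx; simp; omega
      · simp [hx]
    · simp [Finset.sum_add_distrib, h]

end helpers

/-- A polynomial is diagonally `(G(m,n),q)`-harmonic iff it is killed by the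
operators `D_{q,d}` with `|d| = m` or `|d| = 2m`. -/
theorem qHarmonic_iff_low_degrees {K : Type*} [Field K] [CharZero K] {ℓ n : ℕ}
    (hℓ : 1 ≤ ℓ) (hn : 1 ≤ n) (q : K) (hq : q ≠ 0) (m : ℕ) (hm : 1 ≤ m)
    (f : MvPolynomial (Fin ℓ × Fin n) K) :
    (∀ d : Fin ℓ → ℕ, (∃ k : ℕ, 0 < k ∧ ∑ i, d i = m * k) → Dq ℓ n q d f = 0)
      ↔ (∀ d : Fin ℓ → ℕ, (∑ i, d i = m ∨ ∑ i, d i = 2 * m) → Dq ℓ n q d f = 0) := by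
  constructor
  · rintro h d (hd | hd)
    · exact h d ⟨1, by omega, by omega⟩
    · exact h d ⟨2, by omega, by omega⟩
  · intro h
    have key : ∀ k : ℕ, 0 < k → ∀ d : Fin ℓ → ℕ, ∑ i, d i = m * k → Dq ℓ n q d f = 0 := by
      intro k
      induction k with
      | zero => intro h0; omega
      | succ k ih =>
        intro _ d hd
        rcases Nat.lt_or_ge k 2 with hk | hk
        · interval_cases k
          · exact h d (Or.inl (by omega))
          · exact h d (Or.inr (by omega))
        · rw [Nat.mul_succ] at hd
          obtain ⟨a, b, rfl, ha⟩ := exists_sub d m (by omega)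
          have hb : ∑ i, b i = m * k := by
            simp only [Pi.add_apply, Finset.sum_add_distrib] at hd
            omega
          have h1 := h a (Or.inl ha)
          have h2 := ih (by omega) b hb
          have hbr := congrArg (fun T => T f) (Dq_bracket (n := n) q a b)
          simp only [LinearMap.sub_apply, Module.End.mul_apply, h1, h2, map_zero, sub_zero,
            LinearMap.smul_apply] at hbr
          refine (smul_eq_zero.mp hbr.symm).resolve_left (mul_ne_zero hq ?_)
          rw [ha, hb, sub_ne_zero]
          intro he
          have : m = m * k := by exact_mod_cast he
          nlinarith
    rintro d ⟨k, hk, hd⟩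
    exact key k hk d hd
end

section
/- Let m ≥ 1 and let φ̄_m : K[x_1,…,x_n] → K[x_1,…,x_n] be the linear map sending each monomial x^a (a ∈ ℕ^n) to (a_1!⋯a_n!/((ma_1)!⋯(ma_n)!))·x^{ma}. Let g ∈ K[x_1,…,x_n] be a polynomial all of whose monomials have every exponent divisible by m (so g ∈ K[x_1^m,…,x_n^m]). Then Σ_{j=1}^n (m + q·x_j∂_{x_j}) ∂_{x_j}^{k} g = 0 for every positive multiple k of m if and only if g = φ̄_m(f) for some f ∈ K[x_1,…,x_n] satisfying D_{q,k} f = 0 for every integer k ≥ 1. In other words, φ̄_m restricts to a linear isomorphism from the q-harmonic polynomials for S_n onto the intersection of the (q/m)-harmonic polynomials for G(m,n) with K[x_1^m,…,x_n^m]. -/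
open MvPolynomial

/-- The deformed operator `D_{q,k} = ∑_j (1 + q x_j ∂_j) ∘ ∂_j^k` on `K[x_1,…,x_n]`. -/
noncomputable def Dq1 {K : Type*} [Field K] (n : ℕ) (q : K) (k : ℕ) :
    Module.End K (MvPolynomial (Fin n) K) :=
  ∑ j : Fin n,
    (1 + q • (LinearMap.mulLeft K (X j) * (pderiv j).toLinearMap)) *
      ((pderiv j).toLinearMap : Module.End K (MvPolynomial (Fin n) K)) ^ k

lemma aux_pow {K : Type*} [Field K] {n : ℕ} (j : Fin n) (k : ℕ) (b : Fin n →₀ ℕ) (c : K) :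
    (((pderiv j).toLinearMap : Module.End K (MvPolynomial (Fin n) K)) ^ k) (monomial b c)
      = monomial (b - Finsupp.single j k) (c * ((b j).descFactorial k : K)) := by
  induction k with
  | zero => simp
  | succ k ih =>
    rw [pow_succ', Module.End.mul_apply, ih]
    change pderiv j _ = _
    rw [pderiv_monomial, tsub_tsub, ← Finsupp.single_add, Nat.descFactorial_succ]
    congr 1
    simp only [Finsupp.tsub_apply, Finsupp.single_eq_same]
    push_cast
    ring

lemma aux_prod {n : ℕ} (F : ℕ → ℕ) (j : Fin n) (b : Fin n →₀ ℕ) :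
    (∏ i, F ((b + Finsupp.single j 1 : Fin n →₀ ℕ) i)) * F (b j) = (∏ i, F (b i)) * F (b j + 1) := by
  rw [← Finset.mul_prod_erase _ (fun i => F ((b + Finsupp.single j 1 : Fin n →₀ ℕ) i)) (Finset.mem_univ j),
    ← Finset.mul_prod_erase _ (fun i => F (b i)) (Finset.mem_univ j)]
  have : ∏ i ∈ Finset.univ.erase j, F ((b + Finsupp.single j 1 : Fin n →₀ ℕ) i)
      = ∏ i ∈ Finset.univ.erase j, F (b i) := by
    apply Finset.prod_congr rfl
    intro i hi
    have : i ≠ j := Finset.ne_of_mem_erase hi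
    simp [Finsupp.single_apply, this.symm]
  rw [this]
  simp
  ring

noncomputable def auxC (K : Type*) [Field K] {n : ℕ} (m : ℕ) (a : Fin n →₀ ℕ) : K :=
  ((∏ j, (a j).factorial : ℕ) : K) / ((∏ j, (m * a j).factorial : ℕ) : K)

lemma auxC_ne (K : Type*) [Field K] [CharZero K] {n : ℕ} (m : ℕ) (a : Fin n →₀ ℕ) :
    auxC K m a ≠ 0 := by
  unfold auxC
  apply div_ne_zero <;>
  · rw [Nat.cast_ne_zero]
    exact Finset.prod_ne_zero_iff.2 fun i _ => Nat.factorial_ne_zero _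

lemma auxC_succ (K : Type*) [Field K] [CharZero K] {n : ℕ} (m : ℕ) (j : Fin n)
    (b : Fin n →₀ ℕ) :
    auxC K m (b + Finsupp.single j 1) * ((m * (b j + 1)).descFactorial m : K)
      = auxC K m b * ((b j + 1 : ℕ) : K) := by
  have h1 := aux_prod Nat.factorial j b
  have h2 := aux_prod (fun t => (m * t).factorial) j b
  have h3 : (m * (b j)).factorial * (m * (b j + 1)).descFactorial m
      = (m * (b j + 1)).factorial := by
    have := Nat.factorial_mul_descFactorial (n := m * (b j + 1)) (k := m) (by nlinarith)
    rwa [show m * (b j + 1) - m = m * b j by rw [mul_add, mul_one, Nat.add_sub_cancel]] at this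
  have hA : ∀ a : Fin n →₀ ℕ, ((∏ i, (m * a i).factorial : ℕ) : K) ≠ 0 := fun a => by
    rw [Nat.cast_ne_zero]
    exact Finset.prod_ne_zero_iff.2 fun i _ => Nat.factorial_ne_zero _
  have h1' : (∏ i, ((b + Finsupp.single j 1 : Fin n →₀ ℕ) i).factorial)
      = (∏ i, (b i).factorial) * (b j + 1) := by
    apply Nat.eq_of_mul_eq_mul_right (Nat.factorial_pos (b j))
    rw [h1, Nat.factorial_succ]; ring
  have h2' : (∏ i, (m * (b + Finsupp.single j 1 : Fin n →₀ ℕ) i).factorial)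
      = (∏ i, (m * b i).factorial) * (m * (b j + 1)).descFactorial m := by
    apply Nat.eq_of_mul_eq_mul_right (Nat.factorial_pos (m * b j))
    rw [h2, ← h3]; ring
  have e := hA (b + Finsupp.single j 1)
  have e0 := hA b
  unfold auxC
  rw [h2'] at e ⊢
  rw [h1']
  rw [Nat.cast_mul] at e ⊢
  have e1 := right_ne_zero_of_mul e
  rw [Nat.cast_mul]
  generalize ((∏ i, (m * b i).factorial : ℕ) : K) = u at *
  generalize (((m * (b j + 1)).descFactorial m : ℕ) : K) = v at *
  field_simp

/-- `φ̄_m` restricts to a linear isomorphism from the `q`-harmonic polynomials for `S_n`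
onto the `(q/m)`-harmonic polynomials for `G(m,n)` lying in `K[x_1^m,…,x_n^m]`. -/
theorem inflate_qHarmonic_iff {K : Type*} [Field K] [CharZero K] {n : ℕ} (hn : 1 ≤ n)
    (q : K) (m : ℕ) (hm : 1 ≤ m)
    (φ : MvPolynomial (Fin n) K →ₗ[K] MvPolynomial (Fin n) K)
    (hφ : ∀ a : Fin n →₀ ℕ,
      φ (monomial a 1)
        = (((∏ j, (a j).factorial : ℕ) : K) / ((∏ j, (m * a j).factorial : ℕ) : K)) •
            monomial (m • a) 1)
    (g : MvPolynomial (Fin n) K) (hg : ∀ a ∈ g.support, ∀ j : Fin n, m ∣ a j) :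
    (∀ k : ℕ, (∃ t : ℕ, 0 < t ∧ k = m * t) →
        ∑ j : Fin n,
            ((m : K) • ((((pderiv j).toLinearMap :
                  Module.End K (MvPolynomial (Fin n) K)) ^ k) g)
              + q • (X j * pderiv j ((((pderiv j).toLinearMap :
                  Module.End K (MvPolynomial (Fin n) K)) ^ k) g))) = 0)
      ↔ ∃ f : MvPolynomial (Fin n) K,
          (∀ k : ℕ, 1 ≤ k → Dq1 n q k f = 0) ∧ g = φ f := by
  have hφ' : ∀ (a : Fin n →₀ ℕ) (c : K), φ (monomial a c) = monomial (m • a) (c * auxC K m a) := by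
    intro a c
    have : monomial a c = c • monomial a (1 : K) := by simp [smul_monomial]
    rw [this, map_smul, hφ, smul_smul, smul_monomial]
    simp [auxC]
  have hS : ∀ j : Fin n, SemiconjBy (φ : Module.End K (MvPolynomial (Fin n) K))
      (pderiv j).toLinearMap
      (((pderiv j).toLinearMap : Module.End K (MvPolynomial (Fin n) K)) ^ m) := by
    intro j
    apply LinearMap.ext
    intro p
    rw [Module.End.mul_apply, Module.End.mul_apply]
    induction p using MvPolynomial.induction_on' with
    | add p r hp hr => simp only [map_add, hp, hr]
    | monomial a c =>
      rw [hφ', aux_pow]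
      change φ (pderiv j _) = _
      rw [pderiv_monomial, hφ']
      by_cases h : a j = 0
      · have : (m * 0).descFactorial m = 0 := by
          rw [Nat.descFactorial_eq_zero_iff_lt]; omega
        have h2 : (m • a) j = m * 0 := by simp [h]
        rw [h2, this, h]
        simp
      · obtain ⟨b, rfl⟩ : ∃ b, a = b + Finsupp.single j 1 :=
          ⟨a - Finsupp.single j 1, (tsub_add_cancel_of_le
            (Finsupp.single_le_iff.2 (Nat.one_le_iff_ne_zero.2 h))).symm⟩
        have e1 : m • (b + Finsupp.single j 1) - Finsupp.single j m = m • b := by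
          rw [smul_add, Finsupp.smul_single]; simp
        have e2 : (m • (b + Finsupp.single j 1) : Fin n →₀ ℕ) j = m * (b j + 1) := by simp [mul_add]
        have e3 : (b + Finsupp.single j 1 : Fin n →₀ ℕ) j = b j + 1 := by simp
        rw [e1, e2, e3, add_tsub_cancel_right, mul_assoc c, mul_assoc c, auxC_succ,
          mul_comm (auxC K m b)]
  have hE : ∀ (j : Fin n) (p : MvPolynomial (Fin n) K),
      X j * pderiv j (φ p) = (m : K) • φ (X j * pderiv j p) := by
    intro j p
    induction p using MvPolynomial.induction_on' with
    | add p r hp hr => simp only [map_add, mul_add, smul_add, hp, hr]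
    | monomial a c =>
      rw [hφ', X_mul_pderiv_monomial, X_mul_pderiv_monomial, map_nsmul, hφ',
        Nat.cast_smul_eq_nsmul, smul_smul]
      simp
  have hcoeff : ∀ (p : MvPolynomial (Fin n) K) (a : Fin n →₀ ℕ),
      coeff (m • a) (φ p) = coeff a p * auxC K m a := by
    intro p a
    induction p using MvPolynomial.induction_on' with
    | add p r hp hr => simp only [map_add, coeff_add, add_mul, hp, hr]
    | monomial b c =>
      rw [hφ', coeff_monomial, coeff_monomial]
      by_cases h : b = a
      · simp [h]
      · have : m • b ≠ m • a := by
          intro hh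
          apply h
          ext i
          have := DFunLike.congr_fun hh i
          simp at this
          omega
        simp [h, this]
  have hinj : ∀ p, φ p = 0 → p = 0 := by
    intro p hp
    ext a
    have := hcoeff p a
    rw [hp, coeff_zero] at this
    simpa [auxC_ne] using this.symm
  have hsurj : ∃ f, g = φ f := by
    have : ∀ a ∈ g.support, ∃ f, monomial a (coeff a g) = φ f := by
      intro a ha
      choose b hb using hg a ha
      refine ⟨monomial (Finsupp.equivFunOnFinite.symm b)
        (coeff a g / auxC K m (Finsupp.equivFunOnFinite.symm b)), ?_⟩
      rw [hφ', div_mul_cancel₀ _ (auxC_ne K m _)]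
      have : a = m • Finsupp.equivFunOnFinite.symm b := by
        ext i
        simp [hb i]
      rw [← this]
    choose! f hf using this
    refine ⟨∑ a ∈ g.support, f a, ?_⟩
    rw [map_sum, ← Finset.sum_congr rfl hf]
    exact g.as_sum
  have hkey : ∀ (f : MvPolynomial (Fin n) K) (t : ℕ),
      ∑ j : Fin n,
            ((m : K) • ((((pderiv j).toLinearMap :
                  Module.End K (MvPolynomial (Fin n) K)) ^ (m * t)) (φ f))
              + q • (X j * pderiv j ((((pderiv j).toLinearMap :
                  Module.End K (MvPolynomial (Fin n) K)) ^ (m * t)) (φ f))))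
        = (m : K) • φ (Dq1 n q t f) := by
    intro f t
    rw [Dq1, LinearMap.sum_apply, map_sum, Finset.smul_sum]
    refine Finset.sum_congr rfl fun j _ => ?_
    have h := LinearMap.congr_fun ((hS j).pow_right t) f
    rw [Module.End.mul_apply, Module.End.mul_apply, ← pow_mul] at h
    rw [← h, hE, Module.End.mul_apply, LinearMap.add_apply, map_add, smul_add, smul_comm q (m : K),
      ← map_smul φ q]
    rfl
  have hm0 : (m : K) ≠ 0 := Nat.cast_ne_zero.2 (by omega)
  constructor
  · intro H
    obtain ⟨f, rfl⟩ := hsurj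
    refine ⟨f, fun k hk => ?_, rfl⟩
    have := H (m * k) ⟨k, hk, rfl⟩
    rw [hkey] at this
    exact hinj _ ((smul_eq_zero.1 this).resolve_left hm0)
  · rintro ⟨f, hf, rfl⟩ k ⟨t, ht, rfl⟩
    rw [hkey, hf t ht, map_zero, smul_zero]
end
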